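/- arXiv:2005.00772 — 2 statements merged into one kernel-verified Lean document; each statement's English description precedes it below -/
import Mathlib

section
/- Let n be a natural number and let a, c be real numbers such that (2a)_n ≠ 0 and (2c)_n ≠ 0. Then ∑_{k=0}^{n} (−1)^k · binom(n,k) · (a)_k (c)_{n−k} / ((2a)_k (2c)_{n−k}) equals χ(n even) · [(1)_n (a+c)_n / ((2a)_n (2c)_n)] · [(a)_{⌊n/2⌋} (c)_{⌊n/2⌋} / ((1)_{⌊n/2⌋} (a+c)_{⌊n/2⌋})]. -/
/-- Real Pochhammer symbol: `(x)_0 = 1`, `(x)_n = x(x+1)⋯(x+n-1)`. -/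
def poch (x : ℝ) (n : ℕ) : ℝ := ∏ i ∈ Finset.range n, (x + i)

open PowerSeries in
/-- the exponential series `e^{rx}` -/
noncomputable def expS (r : ℝ) : PowerSeries ℝ := rescale r (exp ℝ)

open PowerSeries in
lemma expS_deriv (r : ℝ) : derivative ℝ (expS r) = C r * expS r := by
  ext n
  simp only [expS, coeff_derivative, coeff_rescale, coeff_exp, coeff_C_mul]
  simp only [Nat.factorial_succ, eq_ratCast]
  push_cast
  have : (n.factorial : ℝ) ≠ 0 := by positivity
  have : (n : ℝ) + 1 ≠ 0 := by positivity
  field_simp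
  ring

open PowerSeries in
lemma expS_mul (r s : ℝ) (h : r + s = 0) : expS r * expS s = 1 := by
  unfold expS
  rw [exp_mul_exp_eq_exp_add, h]
  simp [rescale_zero]

lemma poch_succ (x : ℝ) (n : ℕ) : poch x (n + 1) = poch x n * (x + n) := by
  simp [poch, Finset.prod_range_succ]

lemma poch_zero (x : ℝ) : poch x 0 = 1 := by simp [poch]

lemma poch_ne (x : ℝ) (n : ℕ) (h : poch x n ≠ 0) (i : ℕ) (hi : i < n) : x + i ≠ 0 := by
  unfold poch at h
  rw [Finset.prod_ne_zero_iff] at h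
  exact h i (by simpa using hi)

lemma poch_ne' (x : ℝ) (n : ℕ) (h : poch x n ≠ 0) (i : ℕ) (hi : i ≤ n) : poch x i ≠ 0 := by
  unfold poch
  rw [Finset.prod_ne_zero_iff]
  intro j hj
  exact poch_ne x n h j (by simp at hj; omega)

lemma poch_one (n : ℕ) : poch 1 n = n.factorial := by
  induction n with
  | zero => simp [poch]
  | succ n ih => rw [poch_succ, ih, Nat.factorial_succ]; push_cast; ring

lemma poch_two (a : ℝ) (m : ℕ) : poch (2 * a) (2 * m) = 4 ^ m * poch a m * poch (a + 1 / 2) m := by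
  induction m with
  | zero => simp [poch]
  | succ n ih =>
    rw [show 2 * (n + 1) = 2 * n + 1 + 1 by ring, poch_succ, poch_succ, ih, poch_succ, poch_succ]
    push_cast; ring

/-- falling factorial -/
def fallF (x : ℝ) (n : ℕ) : ℝ := ∏ i ∈ Finset.range n, (x - i)

lemma fallF_succ (x : ℝ) (n : ℕ) : fallF x (n + 1) = fallF x n * (x - n) := by
  simp [fallF, Finset.prod_range_succ]

lemma fallF_succ' (x : ℝ) (n : ℕ) : fallF x (n + 1) = x * fallF (x - 1) n := by
  simp only [fallF, Finset.prod_range_succ']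
  rw [mul_comm]
  simp [sub_sub, add_comm]

lemma poch_fallF (x : ℝ) (i j : ℕ) : poch x i * fallF (x + i + j - 1) j = poch x (i + j) := by
  induction j with
  | zero => simp [fallF]
  | succ j ih =>
    rw [fallF_succ', ← add_assoc, poch_succ, ← ih]
    push_cast
    rw [show x + i + (j + 1) - 1 - 1 = x + i + j - 1 by ring]
    ring

lemma fallF_add (x y : ℝ) (n : ℕ) : fallF (x + y) n =
    ∑ ij ∈ Finset.HasAntidiagonal.antidiagonal n, (n.choose ij.1 : ℝ) * (fallF x ij.1 * fallF y ij.2) := by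
  induction n with
  | zero => simp [fallF]
  | succ n ih =>
    rw [Finset.sum_antidiagonal_choose_succ_mul (fun i j => fallF x i * fallF y j),
      ← Finset.sum_add_distrib, fallF_succ, ih, Finset.sum_mul]
    refine Finset.sum_congr rfl fun ij hij => ?_
    have h := Finset.HasAntidiagonal.mem_antidiagonal.mp hij
    have h2 : n.choose ij.2 = n.choose ij.1 := by
      rw [← h, Nat.choose_symm_add]
    rw [h2, fallF_succ, fallF_succ]
    have : (n : ℝ) = ij.1 + ij.2 := by exact_mod_cast h.symm
    rw [this]; ring

open PowerSeries in
/-- the series Kummer confluent hypergeometric -/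
noncomputable def kumF (a : ℝ) : PowerSeries ℝ :=
  mk fun k => poch a k / poch (2 * a) k / k.factorial

open PowerSeries in
noncomputable def kumV (a : ℝ) : PowerSeries ℝ := kumF a * expS (-1 / 2)

open PowerSeries in
lemma kumF_rec (a : ℝ) (n : ℕ) (ha : poch (2 * a) n ≠ 0) (k : ℕ) (hk : k < n) :
    (k + 1) * (2 * a + k) * coeff (k + 1) (kumF a) = (a + k) * coeff k (kumF a) := by
  simp only [kumF, coeff_mk, poch_succ, Nat.factorial_succ]
  have h1 := poch_ne _ _ ha k hk
  have h2 := poch_ne' _ _ ha k hk.le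
  have : (k.factorial : ℝ) ≠ 0 := by positivity
  have : (k : ℝ) + 1 ≠ 0 := by positivity
  push_cast
  field_simp

open PowerSeries in
noncomputable def kumR (a : ℝ) : PowerSeries ℝ :=
  X * derivative ℝ (derivative ℝ (kumF a)) + C (2 * a) * derivative ℝ (kumF a)
    - X * derivative ℝ (kumF a) - C a * kumF a

open PowerSeries in
lemma kumR_coeff (a : ℝ) (n : ℕ) (ha : poch (2 * a) n ≠ 0) (k : ℕ) (hk : k < n) :
    coeff k (kumR a) = 0 := by
  have h := kumF_rec a n ha k hk
  unfold kumR
  cases k with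
  | zero =>
    simp only [map_sub, map_add, coeff_C_mul, coeff_derivative, coeff_zero_X_mul]
    push_cast at h ⊢
    linarith
  | succ k =>
    simp only [map_sub, map_add, coeff_C_mul, coeff_derivative, coeff_succ_X_mul]
    push_cast at h ⊢
    linarith

open PowerSeries in
lemma kumV_ode (a : ℝ) : X * derivative ℝ (derivative ℝ (kumV a))
    + C (2 * a) * derivative ℝ (kumV a) - C (1 / 4) * (X * kumV a) = kumR a * expS (-1 / 2) := by
  unfold kumV kumR
  have e1 : (C (2 * a) : PowerSeries ℝ) = 2 * C a := by rw [map_mul, map_ofNat]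
  have e2 : (C (-1 / 2) : PowerSeries ℝ) = - C (1 / 2) := by rw [← map_neg]; norm_num
  have e3 : (C (1 / 4) : PowerSeries ℝ) = C (1 / 2) * C (1 / 2) := by rw [← map_mul]; norm_num
  have e4 : (2 : PowerSeries ℝ) * C (1 / 2) = 1 := by
    rw [show (2 : PowerSeries ℝ) = C 2 by rw [map_ofNat], ← map_mul]; norm_num
  simp only [Derivation.leibniz, map_add, smul_eq_mul, expS_deriv, derivative_C, e1, e2, e3, map_neg]
  linear_combination (-(X * derivative ℝ (kumF a) * expS (-1/2)) - C a * kumF a * expS (-1/2)) * e4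

open PowerSeries in
lemma kumV_rec (a : ℝ) (n : ℕ) (ha : poch (2 * a) n ≠ 0) (k : ℕ) (hk : k + 1 < n) :
    (k + 2) * (2 * a + k + 1) * coeff (k + 2) (kumV a) = 1 / 4 * coeff k (kumV a) := by
  have h := congrArg (coeff (k + 1)) (kumV_ode a)
  rw [coeff_mul (k + 1) (kumR a), Finset.sum_eq_zero] at h
  · simp only [map_sub, map_add, coeff_C_mul, coeff_derivative, coeff_succ_X_mul] at h
    push_cast at h
    linarith
  · intro x hx
    have := Finset.HasAntidiagonal.mem_antidiagonal.mp hx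
    rw [kumR_coeff a n ha x.1 (by omega), zero_mul]

open PowerSeries in
lemma kumV_zero (a : ℝ) : coeff 0 (kumV a) = 1 := by
  simp [kumV, kumF, expS, poch, coeff_mul, coeff_rescale, -coeff_zero_eq_constantCoeff]

open PowerSeries in
lemma kumV_one (a : ℝ) (n : ℕ) (ha : poch (2 * a) n ≠ 0) (hn : 0 < n) : coeff 1 (kumV a) = 0 := by
  have h := congrArg (coeff 0) (kumV_ode a)
  rw [coeff_mul 0 (kumR a), Finset.sum_eq_zero] at h
  · simp only [map_sub, map_add, coeff_C_mul, coeff_derivative, coeff_zero_X_mul] at h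
    have := poch_ne _ _ ha 0 hn
    simp only [Nat.cast_zero, add_zero] at this
    simp only [Nat.cast_zero, zero_add, mul_one, mul_zero, sub_zero] at h
    exact (mul_eq_zero.mp h).resolve_left this
  · intro x hx
    have := Finset.HasAntidiagonal.mem_antidiagonal.mp hx
    rw [kumR_coeff a n ha x.1 (by omega), zero_mul]

open PowerSeries in
lemma kumV_odd (a : ℝ) (n : ℕ) (ha : poch (2 * a) n ≠ 0) (i : ℕ) (hi : 2 * i + 1 ≤ n) :
    coeff (2 * i + 1) (kumV a) = 0 := by
  induction i with
  | zero => exact kumV_one a n ha (by omega)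
  | succ i ih =>
    have h := kumV_rec a n ha (2 * i + 1) (by omega)
    rw [ih (by omega), mul_zero] at h
    have h1 := poch_ne _ _ ha (2 * i + 1 + 1) (by omega)
    push_cast at h h1
    have h2 : (2 * (i : ℝ) + 1 + 2) ≠ 0 := by positivity
    rw [← add_assoc, ← add_assoc] at h1
    rw [← add_assoc] at h
    exact (mul_eq_zero.mp h).resolve_left (mul_ne_zero h2 h1)

open PowerSeries in
lemma kumV_even (a : ℝ) (n : ℕ) (ha : poch (2 * a) n ≠ 0) (i : ℕ) (hi : 2 * i ≤ n) :
    16 ^ i * i.factorial * poch (a + 1 / 2) i * coeff (2 * i) (kumV a) = 1 := by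
  induction i with
  | zero => simpa [poch] using kumV_zero a
  | succ i ih =>
    have h := kumV_rec a n ha (2 * i) (by omega)
    have ih := ih (by omega)
    rw [show 2 * (i + 1) = 2 * i + 2 by ring, poch_succ, Nat.factorial_succ, pow_succ]
    push_cast at h ⊢
    linear_combination 4 * 16 ^ i * i.factorial * poch (a + 1 / 2) i * h + ih

open PowerSeries in
lemma key (a c : ℝ) : rescale (-1) (kumF a) * kumF c = rescale (-1) (kumV a) * kumV c := by
  have h : rescale (-1 : ℝ) (expS (-1 / 2)) = expS (1 / 2) := by
    unfold expS; rw [rescale_rescale]; norm_num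
  have h2 := expS_mul (1 / 2) (-1 / 2) (by norm_num)
  unfold kumV
  rw [map_mul, h]
  linear_combination (- rescale (-1 : ℝ) (kumF a) * kumF c) * h2

open PowerSeries in
lemma sum_eq (n : ℕ) (a c : ℝ) : ∑ k ∈ Finset.range (n + 1),
        (-1 : ℝ) ^ k * (n.choose k : ℝ) * (poch a k * poch c (n - k)) /
          (poch (2 * a) k * poch (2 * c) (n - k)) =
    n.factorial * ∑ ij ∈ Finset.HasAntidiagonal.antidiagonal n,
      (-1) ^ ij.1 * coeff ij.1 (kumV a) * coeff ij.2 (kumV c) := by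
  have h := congrArg (coeff n) (key a c)
  simp only [coeff_mul, coeff_rescale] at h
  rw [← h, Finset.Nat.sum_antidiagonal_eq_sum_range_succ_mk, Finset.mul_sum]
  refine Finset.sum_congr rfl fun k hk => ?_
  have hk : k ≤ n := by simp at hk; omega
  simp only [kumF, coeff_mk]
  rw [Nat.cast_choose ℝ hk]
  have : (k.factorial : ℝ) ≠ 0 := by positivity
  have : ((n - k).factorial : ℝ) ≠ 0 := by positivity
  simp only [div_eq_mul_inv, mul_inv]
  ring

/-- Sum over an even antidiagonal of a function vanishing at odd first index. -/
lemma sum_even (f : ℕ → ℕ → ℝ) (m : ℕ) (h : ∀ i j, 2 * i + 1 + j = 2 * m → f (2 * i + 1) j = 0) :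
    ∑ ij ∈ Finset.HasAntidiagonal.antidiagonal (2 * m), f ij.1 ij.2 =
      ∑ ij ∈ Finset.HasAntidiagonal.antidiagonal m, f (2 * ij.1) (2 * ij.2) := by
  symm
  apply Finset.sum_of_injOn (fun ij => (2 * ij.1, 2 * ij.2))
  · rintro ⟨a, b⟩ _ ⟨c, d⟩ _ h
    simp at h ⊢; omega
  · rintro ⟨a, b⟩ h
    simp at h ⊢; omega
  · rintro ⟨p, q⟩ hp hq
    have hp := Finset.HasAntidiagonal.mem_antidiagonal.mp hp
    simp only at hp ⊢
    rcases Nat.even_or_odd' p with ⟨i, rfl | rfl⟩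
    · exfalso; apply hq
      refine ⟨(i, m - i), ?_, ?_⟩
      · simp; omega
      · simp; omega
    · exact h i q hp
  · intros; rfl

/-- Proposition 6: binomial convolution formula extracted from Bailey's
product formula for `₁F₁(a; 2a; x) · ₁F₁(c; 2c; -x)`. -/
theorem stmt_10 (n : ℕ) (a c : ℝ)
    (ha : poch (2 * a) n ≠ 0) (hc : poch (2 * c) n ≠ 0)
    (hac : poch (a + c) (n / 2) ≠ 0) :
    ∑ k ∈ Finset.range (n + 1),
        (-1 : ℝ) ^ k * (n.choose k : ℝ) * (poch a k * poch c (n - k)) /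
          (poch (2 * a) k * poch (2 * c) (n - k))
      = (if Even n then 1 else 0) *
          (poch 1 n * poch (a + c) n / (poch (2 * a) n * poch (2 * c) n)) *
          (poch a (n / 2) * poch c (n / 2) / (poch 1 (n / 2) * poch (a + c) (n / 2))) := by
  rw [sum_eq]
  rcases Nat.even_or_odd' n with ⟨m, rfl | rfl⟩
  · rw [sum_even (fun i j => (-1) ^ i * PowerSeries.coeff i (kumV a) * PowerSeries.coeff j (kumV c))]
    swap
    · intro i j hij
      simp only [kumV_odd a _ ha i (by omega), mul_zero, zero_mul]
    rw [if_pos (even_two_mul m), Nat.mul_div_cancel_left m (by norm_num)] at *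
    have hA := ha
    have hC := hc
    rw [poch_two] at hA hC
    have a1 : poch a m ≠ 0 := fun h => hA (by rw [h]; ring)
    have a2 : poch (a + 1 / 2) m ≠ 0 := fun h => hA (by rw [h]; ring)
    have c1 : poch c m ≠ 0 := fun h => hC (by rw [h]; ring)
    have c2 : poch (c + 1 / 2) m ≠ 0 := fun h => hC (by rw [h]; ring)
    have hm : (m.factorial : ℝ) ≠ 0 := by positivity
    have hs : ∑ ij ∈ Finset.HasAntidiagonal.antidiagonal m, (-1) ^ (2 * ij.1) *
        PowerSeries.coeff (2 * ij.1) (kumV a) * PowerSeries.coeff (2 * ij.2) (kumV c) =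
        fallF (a + c + m + m - 1) m /
          (16 ^ m * m.factorial * poch (a + 1 / 2) m * poch (c + 1 / 2) m) := by
      rw [show a + c + m + m - 1 = (c + 1 / 2 + m - 1) + (a + 1 / 2 + m - 1) by ring, fallF_add,
        Finset.sum_div]
      refine Finset.sum_congr rfl fun ij hij => ?_
      obtain ⟨i, j⟩ := ij
      have hij := Finset.HasAntidiagonal.mem_antidiagonal.mp hij
      simp only at hij ⊢
      have e1 := kumV_even a _ ha i (by omega)
      have e2 := kumV_even c _ hc j (by omega)
      have p1 := poch_fallF (a + 1 / 2) i j
      have p2 := poch_fallF (c + 1 / 2) j i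
      rw [add_comm j i] at p2
      subst hij
      have q1 := poch_ne' _ _ a2 i (by omega)
      have q2 := poch_ne' _ _ c2 j (by omega)
      have hi : (i.factorial : ℝ) ≠ 0 := by positivity
      have hj : (j.factorial : ℝ) ≠ 0 := by positivity
      have hch : ((i + j).choose i : ℝ) = (i + j).factorial / (i.factorial * j.factorial) := by
        rw [Nat.cast_choose ℝ (by omega), Nat.add_sub_cancel_left]
      have ea : PowerSeries.coeff (2 * i) (kumV a) =
        1 / (16 ^ i * i.factorial * poch (a + 1 / 2) i) := by
        rw [eq_div_iff (by positivity)]; linarith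
      have eb : PowerSeries.coeff (2 * j) (kumV c) =
        1 / (16 ^ j * j.factorial * poch (c + 1 / 2) j) := by
        rw [eq_div_iff (by positivity)]; linarith
      rw [ea, eb, hch, pow_mul]
      push_cast
      rw [show a + 1 / 2 + (i + j) - 1 = a + 1 / 2 + (i : ℝ) + j - 1 by ring,
        show c + 1 / 2 + (i + j) - 1 = c + 1 / 2 + (j : ℝ) + i - 1 by ring]
      have f1 : fallF (a + 1 / 2 + (i : ℝ) + j - 1) j ≠ 0 := fun h => a2 (by rw [← p1, h, mul_zero])
      have f2 : fallF (c + 1 / 2 + (j : ℝ) + i - 1) i ≠ 0 := fun h => c2 (by rw [← p2, h, mul_zero])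
      rw [← p1, ← p2]
      generalize fallF (a + 1 / 2 + (i : ℝ) + j - 1) j = u at *
      generalize fallF (c + 1 / 2 + (j : ℝ) + i - 1) i = v at *
      generalize poch (a + 1 / 2) i = s at *
      generalize poch (c + 1 / 2) j = t at *
      rw [pow_add]
      norm_num
      field_simp
    rw [hs, poch_one, poch_one, poch_two, poch_two, two_mul m, ← poch_fallF (a + c) m m]
    have h16 : (16 : ℝ) ^ m = 4 ^ m * 4 ^ m := by rw [← mul_pow]; norm_num
    rw [h16]
    generalize fallF (a + c + m + m - 1) m = u at *
    generalize poch (a + 1 / 2) m = s at *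
    generalize poch (c + 1 / 2) m = t at *
    field_simp
  · rw [if_neg (by simp), Finset.sum_eq_zero]
    · simp
    · rintro ⟨p, q⟩ hpq
      have hpq := Finset.HasAntidiagonal.mem_antidiagonal.mp hpq
      simp only at hpq ⊢
      rcases Nat.even_or_odd' p with ⟨i, rfl | rfl⟩
      · obtain ⟨j, rfl⟩ : ∃ j, q = 2 * j + 1 := ⟨m - i, by omega⟩
        rw [kumV_odd c _ hc j (by omega), mul_zero]
      · rw [kumV_odd a _ ha i (by omega), mul_zero, zero_mul]
end

section
/- For all natural numbers n and λ, ∑_{k=0}^{n} (−1)^k · binom(n,k) · n(1+2λ)(1+2n+2λ) · binom(2λ, λ)² / ((1+2k+2λ) · binom(2k+2λ, k+λ) · binom(2n−2k+2λ, n−k+λ)) equals (1+2λ) · binom(2λ, λ)² · binom(n, ⌊n/2⌋) / (binom(λ+n, n) · binom(2λ+2n, λ+n) · binom(2λ+n, λ+⌊n/2⌋)) multiplied by n when n is even, and by n+1 when n is odd, as an equality of rational numbers. -/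
open PowerSeries in
/-- Euler operator `x d/dx` on power series. -/
noncomputable def eulerOp (f : PowerSeries ℚ) : PowerSeries ℚ :=
  PowerSeries.X * PowerSeries.derivative ℚ f

theorem eulerOp_add (f g : PowerSeries ℚ) : eulerOp (f + g) = eulerOp f + eulerOp g := by
  simp [eulerOp, mul_add]

theorem eulerOp_sub (f g : PowerSeries ℚ) : eulerOp (f - g) = eulerOp f - eulerOp g := by
  simp [eulerOp, mul_sub]

theorem eulerOp_mul (f g : PowerSeries ℚ) :
    eulerOp (f * g) = eulerOp f * g + f * eulerOp g := by
  simp only [eulerOp, Derivation.leibniz, smul_eq_mul]; ring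

theorem coeff_eulerOp (f : PowerSeries ℚ) (n : ℕ) :
    PowerSeries.coeff n (eulerOp f) = (n : ℚ) * PowerSeries.coeff n f := by
  cases n with
  | zero => simp [eulerOp]
  | succ n =>
    rw [eulerOp, PowerSeries.coeff_succ_X_mul, PowerSeries.coeff_derivative]
    push_cast; ring

theorem serC_two : (PowerSeries.C (2 : ℚ) : PowerSeries ℚ) = 2 := map_ofNat _ 2

theorem serC_four : (PowerSeries.C (4 : ℚ) : PowerSeries ℚ) = 4 := map_ofNat _ 4

theorem serC_eight : (PowerSeries.C (8 : ℚ) : PowerSeries ℚ) = 8 := map_ofNat _ 8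

/-- coefficients -/
noncomputable def wCoef (l i : ℕ) : ℚ :=
  ((i + l).factorial : ℚ) ^ 2 / (((2 * i + 2 * l + 1).factorial : ℚ) * (i.factorial : ℚ))

theorem wCoef_succ (l i : ℕ) :
    2 * ((i : ℚ) + 1) * (2 * i + 2 * l + 3) * wCoef l (i + 1) = (i + l + 1) * wCoef l i := by
  unfold wCoef
  rw [show i + 1 + l = (i + l) + 1 by ring,
    show 2 * (i + 1) + 2 * l + 1 = (2 * i + 2 * l + 1) + 1 + 1 by ring]
  simp only [Nat.factorial_succ]
  have h1 : ((i + l).factorial : ℚ) ≠ 0 := by positivity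
  have h2 : ((2 * i + 2 * l).factorial : ℚ) ≠ 0 := by positivity
  have h3 : (i.factorial : ℚ) ≠ 0 := by positivity
  push_cast
  field_simp
  ring

theorem ode_of_rec (l : ℕ) (s : ℚ) (f : PowerSeries ℚ)
    (h : ∀ i : ℕ, 2 * ((i : ℚ) + 1) * (2 * i + 2 * l + 3) * PowerSeries.coeff (i + 1) f
      = s * ((i + l + 1) * PowerSeries.coeff i f)) :
    4 * eulerOp (eulerOp f) = PowerSeries.C s * PowerSeries.X *
      (eulerOp f + ((l : PowerSeries ℚ) + 1) * f)
      - 2 * (2 * (l : PowerSeries ℚ) + 1) * eulerOp f := by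
  have e4 : (4 : PowerSeries ℚ) = PowerSeries.C 4 := by simp [serC_two, serC_four, serC_eight]
  have el : (l : PowerSeries ℚ) + 1 = PowerSeries.C ((l : ℚ) + 1) := by simp [serC_two, serC_four, serC_eight]
  have el2 : 2 * (2 * (l : PowerSeries ℚ) + 1) = PowerSeries.C (2 * (2 * (l : ℚ) + 1)) := by
    simp [serC_two, serC_four, serC_eight]
  rw [e4, el, el2]
  ext n
  cases n with
  | zero => simp [mul_assoc, coeff_eulerOp, eulerOp]
  | succ n =>
    have := h n
    simp only [LinearMap.map_sub, LinearMap.map_add, mul_assoc, PowerSeries.coeff_C_mul, coeff_eulerOp,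
      PowerSeries.coeff_succ_X_mul]
    push_cast
    linear_combination this

section
variable (l : ℕ)

noncomputable def serM : PowerSeries ℚ := PowerSeries.mk (wCoef l)
noncomputable def serN : PowerSeries ℚ := PowerSeries.mk (fun i => (-1) ^ i * wCoef l i)
noncomputable def serP : PowerSeries ℚ := serM l * serN l
noncomputable def serD : PowerSeries ℚ :=
  serN l * eulerOp (serM l) - serM l * eulerOp (serN l)
noncomputable def serE : PowerSeries ℚ := eulerOp (serM l) * eulerOp (serN l)

theorem odeM : 4 * eulerOp (eulerOp (serM l)) = PowerSeries.X *
      (eulerOp (serM l) + ((l : PowerSeries ℚ) + 1) * serM l)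
      - 2 * (2 * (l : PowerSeries ℚ) + 1) * eulerOp (serM l) := by
  have := ode_of_rec l 1 (serM l) (by
    intro i
    simp only [serM, PowerSeries.coeff_mk]
    rw [wCoef_succ]; ring)
  simpa using this

theorem odeN : 4 * eulerOp (eulerOp (serN l)) = - PowerSeries.X *
      (eulerOp (serN l) + ((l : PowerSeries ℚ) + 1) * serN l)
      - 2 * (2 * (l : PowerSeries ℚ) + 1) * eulerOp (serN l) := by
  have := ode_of_rec l (-1) (serN l) (by
    intro i
    simp only [serN, PowerSeries.coeff_mk]
    have := wCoef_succ l i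
    rw [pow_succ]
    linear_combination (-(-1 : ℚ) ^ i) * this)
  simpa using this

theorem relD : 4 * eulerOp (serD l) = PowerSeries.X * eulerOp (serP l)
    + PowerSeries.X * (2 * ((l : PowerSeries ℚ) + 1) * serP l)
    - 2 * (2 * (l : PowerSeries ℚ) + 1) * serD l := by
  have hM := odeM l
  have hN := odeN l
  simp only [serD, serP, eulerOp_mul, eulerOp_sub]
  linear_combination serN l * hM - serM l * hN

theorem relP : 4 * eulerOp (eulerOp (serP l)) = PowerSeries.X * serD l
    - 2 * (2 * (l : PowerSeries ℚ) + 1) * eulerOp (serP l) + 8 * serE l := by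
  have hM := odeM l
  have hN := odeN l
  simp only [serD, serP, serE, eulerOp_mul, eulerOp_add]
  linear_combination serN l * hM + serM l * hN

theorem relE : 4 * eulerOp (serE l) = - 4 * (2 * (l : PowerSeries ℚ) + 1) * serE l
    - ((l : PowerSeries ℚ) + 1) * (PowerSeries.X * serD l) := by
  have hM := odeM l
  have hN := odeN l
  simp only [serD, serE, eulerOp_mul]
  linear_combination eulerOp (serN l) * hM + eulerOp (serM l) * hN

noncomputable def cP (n : ℕ) : ℚ := PowerSeries.coeff n (serP l)
noncomputable def cD (n : ℕ) : ℚ := PowerSeries.coeff n (serD l)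

theorem cD_zero : cD l 0 = 0 := by
  simp [cD, serD, eulerOp]

theorem cD_succ (n : ℕ) : (4 * (n : ℚ) + 4 * l + 6) * cD l (n + 1) = (n + 2 * l + 2) * cP l n := by
  have h := relD l
  rw [show (4 : PowerSeries ℚ) = PowerSeries.C 4 by simp [serC_two, serC_four, serC_eight],
    show 2 * ((l : PowerSeries ℚ) + 1) = PowerSeries.C (2 * ((l : ℚ) + 1)) by simp [serC_two, serC_four, serC_eight],
    show 2 * (2 * (l : PowerSeries ℚ) + 1) = PowerSeries.C (2 * (2 * (l : ℚ) + 1)) by simp [serC_two, serC_four, serC_eight]] at h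
  have := congrArg (PowerSeries.coeff (n + 1)) h
  simp only [LinearMap.map_sub, LinearMap.map_add, PowerSeries.coeff_C_mul, coeff_eulerOp,
      PowerSeries.coeff_succ_X_mul] at this
  push_cast at this
  unfold cD cP
  linear_combination this

theorem cP_succ (n : ℕ) : ((n : ℚ) + 2 * l + 2) * (n + 1) * (4 * n + 4 * l + 6) * cP l (n + 1)
    = n * cD l n := by
  have h := relP l
  have h' := relE l
  rw [show (4 : PowerSeries ℚ) = PowerSeries.C 4 by simp [serC_two, serC_four, serC_eight],
    show (8 : PowerSeries ℚ) = PowerSeries.C 8 by simp [serC_two, serC_four, serC_eight],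
    show 2 * (2 * (l : PowerSeries ℚ) + 1) = PowerSeries.C (2 * (2 * (l : ℚ) + 1)) by simp [serC_two, serC_four, serC_eight]] at h
  rw [show - 4 * (2 * (l : PowerSeries ℚ) + 1) = PowerSeries.C (-4 * (2 * (l : ℚ) + 1)) by simp [serC_two, serC_four, serC_eight],
    show (4 : PowerSeries ℚ) = PowerSeries.C 4 by simp [serC_two, serC_four, serC_eight],
    show ((l : PowerSeries ℚ) + 1) = PowerSeries.C ((l : ℚ) + 1) by simp [serC_two, serC_four, serC_eight]] at h'
  have h1 := congrArg (PowerSeries.coeff (n + 1)) h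
  have h2 := congrArg (PowerSeries.coeff (n + 1)) h'
  simp only [LinearMap.map_sub, LinearMap.map_add, PowerSeries.coeff_C_mul, coeff_eulerOp,
      PowerSeries.coeff_succ_X_mul] at h1 h2
  push_cast at h1 h2
  unfold cD cP
  linear_combination ((n : ℚ) + 2 * l + 2) * h1 + 2 * h2

theorem parity (m : ℕ) : cD l (2 * m) = 0 ∧ cP l (2 * m + 1) = 0 := by
  have key : ∀ n, cD l n = 0 → cP l (n + 1) = 0 := by
    intro n h
    have := cP_succ l n
    rw [h, mul_zero] at this
    rcases mul_eq_zero.1 this with h | h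
    · exact absurd h (by positivity)
    · exact h
  have key2 : ∀ n, cP l n = 0 → cD l (n + 1) = 0 := by
    intro n h
    have := cD_succ l n
    rw [h, mul_zero] at this
    rcases mul_eq_zero.1 this with h | h
    · exact absurd h (by positivity)
    · exact h
  induction m with
  | zero => exact ⟨cD_zero l, key 0 (cD_zero l)⟩
  | succ m ih => exact ⟨key2 _ ih.2, key _ (key2 _ ih.2)⟩

theorem cP_even (m : ℕ) : cP l (2 * m) =
    (l.factorial : ℚ) * (2 * m).factorial * (l + 2 * m).factorial * (l + m).factorial ^ 2 /
    ((m.factorial : ℚ) ^ 2 * (4 * m + 2 * l + 1).factorial * (2 * m + 2 * l + 1).factorial) := by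
  induction m with
  | zero =>
    have h1 : ((2 * l + 1).factorial : ℚ) ≠ 0 := by positivity
    simp [cP, serP, serM, serN, wCoef]
    field_simp
  | succ m ih =>
    have h1 := cD_succ l (2 * m)
    have h2 := cP_succ l (2 * m + 1)
    rw [ih] at h1
    have e1 : cD l (2 * m + 1) = _ := eq_div_of_mul_eq (by positivity) ((mul_comm _ _).trans h1)
    rw [e1] at h2
    have e2 : cP l (2 * m + 1 + 1) = _ :=
      eq_div_of_mul_eq (by positivity) ((mul_comm _ _).trans h2)
    rw [show 2 * (m + 1) = 2 * m + 1 + 1 by ring, e2,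
      show l + (2 * m + 1 + 1) = (l + 2 * m) + 1 + 1 by ring,
      show l + (m + 1) = (l + m) + 1 by ring,
      show 4 * (m + 1) + 2 * l + 1 = (4 * m + 2 * l + 1) + 1 + 1 + 1 + 1 by ring,
      show 2 * m + 1 + 1 + 2 * l + 1 = (2 * m + 2 * l + 1) + 1 + 1 by ring]
    simp only [Nat.factorial_succ]
    push_cast
    field_simp
    ring

theorem sum_eq_s15 (n : ℕ) :
    ∑ k ∈ Finset.range (n + 1), (-1 : ℚ) ^ k * wCoef l k * wCoef l (n - k) *
      (2 * ((n - k : ℕ) : ℚ) + 2 * l + 1) = cD l n + (n + 2 * l + 1) * cP l n := by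
  have h : serD l + eulerOp (serP l) + PowerSeries.C (2 * (l : ℚ) + 1) * serP l =
      serN l * (PowerSeries.C 2 * eulerOp (serM l) + PowerSeries.C (2 * (l : ℚ) + 1) * serM l) := by
    simp only [serD, serP, eulerOp_mul]
    rw [show (PowerSeries.C (2 : ℚ)) = 2 by simp [serC_two, serC_four, serC_eight]]
    ring
  have h1 := congrArg (PowerSeries.coeff n) h
  rw [PowerSeries.coeff_mul, Finset.Nat.sum_antidiagonal_eq_sum_range_succ_mk] at h1
  simp only [LinearMap.map_add, PowerSeries.coeff_C_mul, coeff_eulerOp, serN, serM,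
    PowerSeries.coeff_mk] at h1
  unfold cD cP
  rw [show PowerSeries.coeff n (serD l) + ((n : ℚ) + 2 * l + 1) * PowerSeries.coeff n (serP l) =
    PowerSeries.coeff n (serD l) + n * PowerSeries.coeff n (serP l)
      + (2 * l + 1) * PowerSeries.coeff n (serP l) by ring, h1]
  refine Finset.sum_congr rfl fun k _ => ?_
  ring

end

theorem choose_fact (a b c : ℕ) (h : c = a + b) :
    (c.choose a : ℚ) = c.factorial / (a.factorial * b.factorial) := by
  subst h; exact Nat.cast_add_choose ℚ

/-- Corollary 11: reciprocal formula of Theorem D. -/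
theorem stmt_15 (n lam : ℕ) :
    ∑ k ∈ Finset.range (n + 1),
        (-1 : ℚ) ^ k * (n.choose k : ℚ) *
          ((n : ℚ) * (1 + 2 * lam) * (1 + 2 * (n : ℚ) + 2 * lam)
            * ((2 * lam).choose lam : ℚ) ^ 2) /
          ((1 + 2 * (k : ℚ) + 2 * lam) * ((2 * k + 2 * lam).choose (k + lam) : ℚ)
            * ((2 * n - 2 * k + 2 * lam).choose (n - k + lam) : ℚ))
      = (1 + 2 * (lam : ℚ)) * ((2 * lam).choose lam : ℚ) ^ 2 * (n.choose (n / 2) : ℚ) /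
          (((lam + n).choose n : ℚ) * ((2 * lam + 2 * n).choose (lam + n) : ℚ)
            * ((2 * lam + n).choose (lam + n / 2) : ℚ))
        * (if Even n then (n : ℚ) else (n : ℚ) + 1) := by
  have hS : ∀ A : ℚ, ∑ k ∈ Finset.range (n + 1),
        (-1 : ℚ) ^ k * (n.choose k : ℚ) * A /
          ((1 + 2 * (k : ℚ) + 2 * lam) * ((2 * k + 2 * lam).choose (k + lam) : ℚ)
            * ((2 * n - 2 * k + 2 * lam).choose (n - k + lam) : ℚ))
      = A * n.factorial * (cD lam n + (n + 2 * lam + 1) * cP lam n) := by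
    intro A
    rw [← sum_eq_s15, Finset.mul_sum]
    refine Finset.sum_congr rfl fun k hk => ?_
    have hk' : k ≤ n := by simpa [Nat.lt_succ_iff] using hk
    obtain ⟨j, rfl⟩ := Nat.exists_eq_add_of_le hk'
    rw [show 2 * (k + j) - 2 * k + 2 * lam = 2 * j + 2 * lam by omega,
      show k + j - k = j by omega,
      choose_fact k j _ rfl, choose_fact (k + lam) (k + lam) _ (by ring),
      choose_fact (j + lam) (j + lam) _ (by ring)]
    unfold wCoef
    simp only [Nat.factorial_succ]
    push_cast
    field_simp
    ring
  rw [hS]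
  generalize ((2 * lam).choose lam : ℚ) = B
  rcases Nat.even_or_odd' n with ⟨m, rfl | rfl⟩
  · rw [(parity lam m).1, cP_even, if_pos (even_two_mul m), show 2 * m / 2 = m by omega,
      choose_fact m m _ (by ring), choose_fact (2 * m) lam _ (by ring),
      choose_fact (lam + 2 * m) (lam + 2 * m) _ (by ring),
      choose_fact (lam + m) (lam + m) _ (by ring),
      show 2 * lam + 2 * (2 * m) = 4 * m + 2 * lam by ring,
      show 2 * lam + 2 * m = 2 * m + 2 * lam by ring]
    simp only [Nat.factorial_succ]
    push_cast
    field_simp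
    ring
  · have h1 := cD_succ lam (2 * m)
    rw [cP_even] at h1
    have e1 : cD lam (2 * m + 1) = _ :=
      eq_div_of_mul_eq (by positivity) ((mul_comm _ _).trans h1)
    rw [(parity lam m).2, e1, if_neg (by simp),
      show (2 * m + 1) / 2 = m by omega,
      choose_fact m (m + 1) _ (by ring), choose_fact (2 * m + 1) lam _ (by ring),
      choose_fact (lam + (2 * m + 1)) (lam + (2 * m + 1)) _ (by ring),
      choose_fact (lam + m) (lam + m + 1) _ (by ring),
      show 2 * lam + 2 * (2 * m + 1) = 4 * m + 2 * lam + 1 + 1 by ring,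
      show 2 * lam + (2 * m + 1) = 2 * m + 2 * lam + 1 by ring,
      show lam + (2 * m + 1) = lam + 2 * m + 1 by ring]
    simp only [Nat.factorial_succ]
    push_cast
    field_simp
    ring
end
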